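/- Suppose the set Z* of maximizers of the dual function D over ℝ₊^{4N} is nonempty. Then for every z* ∈ Z* and every z ∈ ℝ₊^{4N} with z ∉ Z*, it holds that ⟨∇D(z), z* − z⟩ > 0. -/

import Mathlib

open Matrix

noncomputable section

/-- Euclidean norm of a vector in ℝ^{4N}, represented as four blocks of ℝ^N. -/
def enorm4 {N : ℕ} (w : Fin 4 → Fin N → ℝ) : ℝ :=
  Real.sqrt (∑ b, ∑ i, w b i ^ 2)

/-- sign(x) = 1 if x ≥ 0 and −1 if x < 0. -/
def sgn (x : ℝ) : ℝ := if 0 ≤ x then 1 else -1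

/-- The (linearized) voltage map v(q) = A q + d. -/
def volt {N : ℕ} (A : Matrix (Fin N) (Fin N) ℝ) (d : Fin N → ℝ) (q : Fin N → ℝ) :
    Fin N → ℝ :=
  A *ᵥ q + d

/-- q(z) = λ^min − λ^max + A⁻¹(μ^min − μ^max). -/
def qOf {N : ℕ} (A : Matrix (Fin N) (Fin N) ℝ) (z : Fin 4 → Fin N → ℝ) : Fin N → ℝ :=
  z 0 - z 1 + A⁻¹ *ᵥ (z 2 - z 3)

/-- ∇D(z) = (v^min − v(q(z)), v(q(z)) − v^max, q^min − q(z), q(z) − q^max). -/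
def gradD {N : ℕ} (A : Matrix (Fin N) (Fin N) ℝ) (d vmin vmax qmin qmax : Fin N → ℝ)
    (z : Fin 4 → Fin N → ℝ) : Fin 4 → Fin N → ℝ :=
  ![vmin - volt A d (qOf A z), volt A d (qOf A z) - vmax,
    qmin - qOf A z, qOf A z - qmax]

/-- V(z) = ‖z − ⌈z + ∇D(z)⌉₊‖. -/
def Vfun {N : ℕ} (A : Matrix (Fin N) (Fin N) ℝ) (d vmin vmax qmin qmax : Fin N → ℝ)
    (z : Fin 4 → Fin N → ℝ) : ℝ :=
  enorm4 (fun b i => z b i - max (z b i + gradD A d vmin vmax qmin qmax z b i) 0)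

/-- The Lagrangian dual function
D(z) = inf_q [ (1/2) qᵀAq + (λ^min)ᵀ(v^min − v(q)) + (λ^max)ᵀ(v(q) − v^max)
  + (μ^min)ᵀ(q^min − q) + (μ^max)ᵀ(q − q^max) ]. -/
def dualFun {N : ℕ} (A : Matrix (Fin N) (Fin N) ℝ) (d vmin vmax qmin qmax : Fin N → ℝ)
    (z : Fin 4 → Fin N → ℝ) : ℝ :=
  ⨅ q : Fin N → ℝ,
    ((1 / 2) * (q ⬝ᵥ A *ᵥ q) + (z 0) ⬝ᵥ (vmin - volt A d q)
      + (z 1) ⬝ᵥ (volt A d q - vmax) + (z 2) ⬝ᵥ (qmin - q) + (z 3) ⬝ᵥ (q - qmax))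

/-- fes(q) = Euclidean distance from (q, v(q)) to the box [q^min,q^max] × [v^min,v^max]. -/
def fes {N : ℕ} (A : Matrix (Fin N) (Fin N) ℝ) (d vmin vmax qmin qmax : Fin N → ℝ)
    (q : Fin N → ℝ) : ℝ :=
  sInf { r : ℝ | ∃ y1 y2 : Fin N → ℝ,
    (∀ i, qmin i ≤ y1 i ∧ y1 i ≤ qmax i) ∧ (∀ i, vmin i ≤ y2 i ∧ y2 i ≤ vmax i) ∧
    r = Real.sqrt ((∑ i, (q i - y1 i) ^ 2) + ∑ i, (volt A d q i - y2 i) ^ 2) }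

/-!
The Lagrangian is affine in the multipliers, so `D` is a pointwise infimum of affine functions of
`z`. Evaluating the Lagrangian of another multiplier `w` at the minimizer `q(z)` for `z` gives the
supergradient inequality `D w ≤ D z + ⟨∇D z, w - z⟩`, since the slope of the Lagrangian in the
multipliers at `q(z)` is exactly the constraint residual `∇D z`. The minimality of `q(z)` itself is
completion of the square.
-/

section LagrangianDuality

lemma iInf_add_apply_le_of_isMinOn {Q E : Type*} [AddCommGroup E] [Module ℝ E]
    (f : Q → ℝ) (g : Q → E →ₗ[ℝ] ℝ) {z w : E} {q₀ : Q}
    (hz : IsMinOn (fun q => f q + g q z) Set.univ q₀)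
    (hw : BddBelow (Set.range fun q => f q + g q w)) :
    ⨅ q, (f q + g q w) ≤ (⨅ q, (f q + g q z)) + g q₀ (w - z) := by
  have : Nonempty Q := ⟨q₀⟩
  calc ⨅ q, (f q + g q w) ≤ f q₀ + g q₀ w := ciInf_le hw q₀
    _ = (f q₀ + g q₀ z) + g q₀ (w - z) := by rw [map_sub]; ring
    _ ≤ (⨅ q, (f q + g q z)) + g q₀ (w - z) :=
        add_le_add_left (le_ciInf (isMinOn_univ_iff.mp hz)) _

/-- The pairing `z ↦ ⟨c, z⟩` on vectors split into blocks, as a linear functional of `z`. -/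
def blockPairing {κ ι : Type*} [Fintype κ] [Fintype ι] (c : κ → ι → ℝ) :
    (κ → ι → ℝ) →ₗ[ℝ] ℝ :=
  ∑ b, dotProductBilin ℝ ℝ (c b) ∘ₗ LinearMap.proj b

lemma blockPairing_apply {κ ι : Type*} [Fintype κ] [Fintype ι] (c z : κ → ι → ℝ) :
    blockPairing c z = ∑ b, c b ⬝ᵥ z b := by
  simp [blockPairing]

end LagrangianDuality

section QuadraticForm

lemma isSymm_of_isHermitian {n R : Type*} [Star R] [TrivialStar R] {A : Matrix n n R}
    (hA : A.IsHermitian) : A.IsSymm := by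
  rw [IsSymm, ← conjTranspose_eq_transpose_of_trivial, hA.eq]

variable {n : Type*} [Fintype n]

lemma dotProduct_mulVec_comm_of_isSymm {R : Type*} [CommSemiring R] {A : Matrix n n R}
    (hA : A.IsSymm) (x y : n → R) : x ⬝ᵥ A *ᵥ y = (A *ᵥ x) ⬝ᵥ y := by
  rw [dotProduct_mulVec, ← mulVec_transpose, hA.eq]

lemma isMinOn_quadratic_of_posSemidef {A : Matrix n n ℝ} (hA : A.PosSemidef) (x : n → ℝ) :
    IsMinOn (fun y => (1 / 2) * (y ⬝ᵥ A *ᵥ y) - (A *ᵥ x) ⬝ᵥ y) Set.univ x := by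
  refine isMinOn_univ_iff.mpr fun y => ?_
  have hcross : x ⬝ᵥ A *ᵥ y = (A *ᵥ x) ⬝ᵥ y :=
    dotProduct_mulVec_comm_of_isSymm (isSymm_of_isHermitian hA.isHermitian) x y
  have hsquare : (1 / 2) * (y ⬝ᵥ A *ᵥ y) - (A *ᵥ x) ⬝ᵥ y =
      (1 / 2) * (x ⬝ᵥ A *ᵥ x) - (A *ᵥ x) ⬝ᵥ x + (1 / 2) * ((y - x) ⬝ᵥ A *ᵥ (y - x)) := by
    simp only [mulVec_sub, dotProduct_sub, sub_dotProduct, hcross, dotProduct_comm _ (A *ᵥ x)]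
    ring
  have hnonneg : 0 ≤ (y - x) ⬝ᵥ A *ᵥ (y - x) := by
    simpa only [star_trivial] using hA.dotProduct_mulVec_nonneg (y - x)
  linarith

end QuadraticForm

section DualFunction

variable {N : ℕ} (A : Matrix (Fin N) (Fin N) ℝ) (d vmin vmax qmin qmax : Fin N → ℝ)

/-- The left-hand sides of the constraints `v^min ≤ v(q) ≤ v^max`, `q^min ≤ q ≤ q^max` written as
`constraintResidual ≤ 0`, one block per multiplier. -/
def constraintResidual (q : Fin N → ℝ) : Fin 4 → Fin N → ℝ :=
  ![vmin - volt A d q, volt A d q - vmax, qmin - q, q - qmax]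

/-- The Lagrangian, whose infimum over `q` is the dual function at `z`; the constraint term is
kept as a linear functional applied to the multiplier. -/
def lagrangian (z : Fin 4 → Fin N → ℝ) (q : Fin N → ℝ) : ℝ :=
  (1 / 2) * (q ⬝ᵥ A *ᵥ q) + blockPairing (constraintResidual A d vmin vmax qmin qmax q) z

lemma dualFun_eq_iInf_lagrangian (z : Fin 4 → Fin N → ℝ) :
    dualFun A d vmin vmax qmin qmax z = ⨅ q, lagrangian A d vmin vmax qmin qmax z q := by
  simp only [dualFun, lagrangian, blockPairing_apply, constraintResidual, Fin.sum_univ_four,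
    Matrix.cons_val, add_assoc, dotProduct_comm]

lemma gradD_eq_constraintResidual_qOf (z : Fin 4 → Fin N → ℝ) :
    gradD A d vmin vmax qmin qmax z = constraintResidual A d vmin vmax qmin qmax (qOf A z) :=
  rfl

variable {A}

lemma mulVec_qOf (hdet : IsUnit A.det) (z : Fin 4 → Fin N → ℝ) :
    A *ᵥ qOf A z = A *ᵥ (z 0 - z 1) + (z 2 - z 3) := by
  rw [qOf, mulVec_add, mulVec_mulVec, mul_nonsing_inv A hdet, one_mulVec]

lemma blockPairing_constraintResidual_eq_sub (hA : A.IsSymm) (hdet : IsUnit A.det)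
    (z : Fin 4 → Fin N → ℝ) (q : Fin N → ℝ) :
    blockPairing (constraintResidual A d vmin vmax qmin qmax q) z =
      blockPairing (constraintResidual A d vmin vmax qmin qmax 0) z - (A *ᵥ qOf A z) ⬝ᵥ q := by
  simp only [mulVec_qOf hdet, blockPairing_apply, constraintResidual, volt, Fin.sum_univ_four,
    Matrix.cons_val, mulVec_zero, add_dotProduct, sub_dotProduct, zero_dotProduct, mulVec_sub,
    dotProduct_add, dotProduct_sub, ← dotProduct_mulVec_comm_of_isSymm hA, dotProduct_comm _ q]
  ring

lemma isMinOn_lagrangian_qOf (hA : A.PosDef) (z : Fin 4 → Fin N → ℝ) :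
    IsMinOn (lagrangian A d vmin vmax qmin qmax z) Set.univ (qOf A z) := by
  have hdet : IsUnit A.det := (isUnit_iff_isUnit_det A).mp hA.isUnit
  refine isMinOn_univ_iff.mpr fun q => ?_
  have hquad := isMinOn_univ_iff.mp (isMinOn_quadratic_of_posSemidef hA.posSemidef (qOf A z)) q
  have hpair := blockPairing_constraintResidual_eq_sub d vmin vmax qmin qmax
    (isSymm_of_isHermitian hA.isHermitian) hdet z
  rw [lagrangian, lagrangian, hpair q, hpair (qOf A z)]
  linarith

lemma dualFun_le_add_gradD (hA : A.PosDef) (z w : Fin 4 → Fin N → ℝ) :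
    dualFun A d vmin vmax qmin qmax w ≤ dualFun A d vmin vmax qmin qmax z +
      ∑ b, ∑ i, gradD A d vmin vmax qmin qmax z b i * (w b i - z b i) := by
  have hmin := isMinOn_lagrangian_qOf d vmin vmax qmin qmax hA
  have hbdd : BddBelow (Set.range (lagrangian A d vmin vmax qmin qmax w)) :=
    ⟨_, Set.forall_mem_range.mpr (isMinOn_univ_iff.mp (hmin w))⟩
  rw [dualFun_eq_iInf_lagrangian, dualFun_eq_iInf_lagrangian, gradD_eq_constraintResidual_qOf]
  exact (iInf_add_apply_le_of_isMinOn _ _ (hmin z) hbdd).trans_eq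
    (congrArg _ (blockPairing_apply _ _))

theorem stmt_17_general (hA : A.PosDef) {z w : Fin 4 → Fin N → ℝ}
    (hlt : dualFun A d vmin vmax qmin qmax z < dualFun A d vmin vmax qmin qmax w) :
    0 < ∑ b, ∑ i, gradD A d vmin vmax qmin qmax z b i * (w b i - z b i) := by
  linarith [dualFun_le_add_gradD d vmin vmax qmin qmax hA z w]

end DualFunction

/-- Claim 3: if the set Z* of maximizers of the dual function over ℝ₊^{4N} is nonempty,
then for every z* ∈ Z* and every z ∈ ℝ₊^{4N} with z ∉ Z* one has ⟨∇D(z), z* − z⟩ > 0. -/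
theorem stmt_17 (N : ℕ) (hN : 0 < N) (A : Matrix (Fin N) (Fin N) ℝ) (hA : A.PosDef)
    (d vmin vmax qmin qmax : Fin N → ℝ)
    (hv : ∀ i, vmin i ≤ vmax i) (hq : ∀ i, qmin i ≤ qmax i)
    (zstar : Fin 4 → Fin N → ℝ)
    (hzstar : zstar ∈ {w : Fin 4 → Fin N → ℝ | (∀ b i, 0 ≤ w b i) ∧
      ∀ u : Fin 4 → Fin N → ℝ, (∀ b i, 0 ≤ u b i) →
        dualFun A d vmin vmax qmin qmax u ≤ dualFun A d vmin vmax qmin qmax w})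
    (z : Fin 4 → Fin N → ℝ) (hz : ∀ b i, 0 ≤ z b i)
    (hznot : z ∉ {w : Fin 4 → Fin N → ℝ | (∀ b i, 0 ≤ w b i) ∧
      ∀ u : Fin 4 → Fin N → ℝ, (∀ b i, 0 ≤ u b i) →
        dualFun A d vmin vmax qmin qmax u ≤ dualFun A d vmin vmax qmin qmax w}) :
    0 < ∑ b, ∑ i,
      gradD A d vmin vmax qmin qmax z b i * (zstar b i - z b i) := by
  exact stmt_17_general d vmin vmax qmin qmax hA <| not_le.mp fun hle =>
    hznot ⟨hz, fun u hu => (hzstar.2 u hu).trans hle⟩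

end
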